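/- Let n ∈ ℕ, let j ∈ {0, 1, …, n−1}, and let k : (0,∞) → ℝ be locally integrable on [0,∞) and (n−j−1) times continuously differentiable on (0,∞), such that the (j+1)-fold integral I₀₊^{j+1} k is n times differentiable on (0,∞). Then for every t > 0, dⁿ/dtⁿ (k * h_{j+1})(t) = k^{(n−j−1)}(t), where h_{j+1}(t) = t^{j}/j!. Consequently, for f ∈ Cⁿ_{−1}(0,∞) and such a kernel k, the Caputo GFD of arbitrary order admits the representation (∗D_{(k)} f)(t) = (D_{(k)} f)(t) − ∑_{j=0}^{n−1} f^{(j)}(0) k^{(n−j−1)}(t) for t > 0. -/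

import Mathlib

open Real MeasureTheory Set Filter Topology

/-- The Laplace convolution `(f * g)(t) = ∫₀ᵗ f(t-τ) g(τ) dτ`. -/
noncomputable def lconv (f g : ℝ → ℝ) : ℝ → ℝ :=
  fun t => ∫ τ in (0:ℝ)..t, f (t - τ) * g τ

/-- The space `C_{-1}(0,∞)`: functions of the form `t^p f₁(t)` with `p > -1`
and `f₁` continuous on `[0,∞)`. -/
def Cm1 (f : ℝ → ℝ) : Prop :=
  ∃ p : ℝ, -1 < p ∧ ∃ f₁ : ℝ → ℝ, ContinuousOn f₁ (Set.Ici 0) ∧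
    ∀ t : ℝ, 0 < t → f t = t ^ p * f₁ t

/-- The subspace `C_{-1,0}(0,∞)`: functions of the form `t^p f₁(t)` with `-1 < p < 0`
and `f₁` continuous on `[0,∞)`. -/
def Cm10 (f : ℝ → ℝ) : Prop :=
  ∃ p : ℝ, -1 < p ∧ p < 0 ∧ ∃ f₁ : ℝ → ℝ, ContinuousOn f₁ (Set.Ici 0) ∧
    ∀ t : ℝ, 0 < t → f t = t ^ p * f₁ t

/-!
With `c j = f^{(j)}(0+)`, the remainder `f - ∑ c j • h_{j+1}` is the `n`-fold integral of `f^{(n)}`.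
By Fubini, Laplace convolution commutes with integration from `0`. Hence the convolution of `k` with
the remainder is the `n`-fold integral of `k * f^{(n)}`, which is continuous on `(0,∞)`, and
`k * h_{j+1}` is the `(j+1)`-fold integral of `k`, with `n`-th derivative `k^{(n-j-1)}`. All terms
are therefore `n` times differentiable, and the identity follows by linearity.
-/

section Derivatives

variable {𝕜 F : Type*} [NontriviallyNormedField 𝕜] [NormedAddCommGroup F] [NormedSpace 𝕜 F]
  {s : Set 𝕜} {f f' : 𝕜 → F} {n : ℕ}

lemma eqOn_iteratedDeriv_succ_of_hasDerivAt (hs : IsOpen s)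
    (hf : ∀ x ∈ s, HasDerivAt f (f' x) x) :
    EqOn (iteratedDeriv (n + 1) f) (iteratedDeriv n f') s := by
  rw [iteratedDeriv_succ']
  exact EqOn.iteratedDeriv_of_isOpen (fun x hx => (hf x hx).deriv) hs n

lemma contDiffOn_succ_of_hasDerivAt (hs : IsOpen s) (hf : ∀ x ∈ s, HasDerivAt f (f' x) x)
    (hf' : ContDiffOn 𝕜 n f' s) : ContDiffOn 𝕜 (n + 1 : ℕ) f s := by
  push_cast
  refine (contDiffOn_succ_iff_deriv_of_isOpen hs).2
    ⟨fun x hx => (hf x hx).differentiableAt.differentiableWithinAt, by simp, ?_⟩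
  exact hf'.congr fun x hx => (hf x hx).deriv

lemma contDiffOn_of_differentiableAt_iteratedDeriv (hs : IsOpen s)
    (hdiff : ∀ m < n, ∀ x ∈ s, DifferentiableAt 𝕜 (iteratedDeriv m f) x)
    (hcont : ContinuousOn (iteratedDeriv n f) s) : ContDiffOn 𝕜 n f s := by
  induction n generalizing f with
  | zero => simpa using hcont
  | succ n ih =>
    have hf : ∀ x ∈ s, HasDerivAt f (deriv f x) x := fun x hx => by
      simpa using (hdiff 0 n.succ_pos x hx).hasDerivAt
    refine contDiffOn_succ_of_hasDerivAt hs hf (ih (fun m hm => ?_) ?_)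
    · rw [← iteratedDeriv_succ']
      exact hdiff (m + 1) (by omega)
    · rwa [← iteratedDeriv_succ']

end Derivatives

/-- The functions whose Laplace convolutions are well behaved: continuous on `(0,∞)` and
integrable near `0`. Both the kernels of the fractional derivatives and the elements of `Cm1` are
of this kind. -/
structure IsConvKernel (g : ℝ → ℝ) : Prop where
  continuousOn : ContinuousOn g (Ioi 0)
  intervalIntegrable : ∀ t, 0 < t → IntervalIntegrable g volume 0 t

namespace IsConvKernel

variable {f g : ℝ → ℝ}

lemma of_continuous (hg : Continuous g) : IsConvKernel g :=
  ⟨hg.continuousOn, fun _ _ => hg.intervalIntegrable _ _⟩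

lemma of_locallyIntegrableOn (hg : ContinuousOn g (Ioi 0))
    (hg_int : LocallyIntegrableOn g (Ici 0)) : IsConvKernel g := by
  refine ⟨hg, fun t ht => ?_⟩
  rw [intervalIntegrable_iff_integrableOn_Icc_of_le ht.le]
  exact hg_int.integrableOn_compact_subset Icc_subset_Ici_self isCompact_Icc

lemma sub (hf : IsConvKernel f) (hg : IsConvKernel g) : IsConvKernel fun t => f t - g t :=
  ⟨hf.continuousOn.sub hg.continuousOn,
    fun t ht => (hf.intervalIntegrable t ht).sub (hg.intervalIntegrable t ht)⟩

lemma continuousAt (hg : IsConvKernel g) {t : ℝ} (ht : 0 < t) : ContinuousAt g t :=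
  hg.continuousOn.continuousAt (Ioi_mem_nhds ht)

lemma integrable_indicator_Ioc (hg : IsConvKernel g) {t : ℝ} (ht : 0 < t) :
    Integrable ((Ioc 0 t).indicator g) :=
  (integrable_indicator_iff measurableSet_Ioc).2
    ((intervalIntegrable_iff_integrableOn_Ioc_of_le ht.le).1 (hg.intervalIntegrable t ht))

lemma locallyIntegrable_indicator_Ioi (hg : IsConvKernel g) :
    LocallyIntegrable ((Ioi 0).indicator g) := by
  intro x
  have hx : 0 < |x| + 1 := by positivity
  refine ⟨Iio (|x| + 1), Iio_mem_nhds (by linarith [le_abs_self x]), ?_⟩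
  refine (hg.integrable_indicator_Ioc hx).integrableOn.congr_fun (fun y hy => ?_)
    measurableSet_Iio
  simp only [indicator, mem_Ioc, mem_Ioi, (mem_Iio.1 hy).le, and_true]

lemma hasDerivAt_integral (hg : IsConvKernel g) {t : ℝ} (ht : 0 < t) :
    HasDerivAt (fun u => ∫ s in (0 : ℝ)..u, g s) (g t) t :=
  intervalIntegral.integral_hasDerivAt_right (hg.intervalIntegrable t ht)
    (hg.continuousOn.stronglyMeasurableAtFilter isOpen_Ioi t ht) (hg.continuousAt ht)

end IsConvKernel

lemma Cm1.isConvKernel {f : ℝ → ℝ} (hf : Cm1 f) : IsConvKernel f := by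
  obtain ⟨p, hp, f₁, hf₁, hf_eq⟩ := hf
  refine ⟨?_, fun t ht => ?_⟩
  · have hpow : ContinuousOn (fun t : ℝ => t ^ p) (Ioi 0) :=
      continuousOn_id.rpow_const fun t ht => Or.inl (ne_of_gt ht)
    exact (hpow.mul (hf₁.mono Ioi_subset_Ici_self)).congr hf_eq
  · have hprod : IntervalIntegrable (fun t : ℝ => t ^ p * f₁ t) volume 0 t :=
      (intervalIntegral.intervalIntegrable_rpow' hp).mul_continuousOn
        (hf₁.mono (by simpa only [uIcc_of_le ht.le] using Icc_subset_Ici_self))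
    refine hprod.congr fun s hs => (hf_eq s ?_).symm
    rw [uIoc_of_le ht.le] at hs
    exact hs.1

lemma lconv_comm (f g : ℝ → ℝ) : lconv f g = lconv g f := by
  ext t
  have hsub := intervalIntegral.integral_comp_sub_left (a := 0) (b := t)
    (fun τ => g (t - τ) * f τ) t
  simp only [sub_sub_cancel, sub_self, sub_zero] at hsub
  simp only [lconv, ← hsub, mul_comm (f _)]

lemma lconv_congr_right {k f g : ℝ → ℝ} (h : EqOn f g (Ioi 0)) :
    EqOn (lconv k f) (lconv k g) (Ioi 0) := by
  intro t ht
  refine intervalIntegral.integral_congr_Ioo_of_le (mem_Ioi.1 ht).le fun τ hτ => ?_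
  simp only [h (mem_Ioi.2 hτ.1)]

namespace IsConvKernel

variable {f g k : ℝ → ℝ} {t : ℝ}

lemma intervalIntegrable_lconv_left_half (hf : IsConvKernel f) (hg : IsConvKernel g)
    (ht : 0 < t) : IntervalIntegrable (fun τ => f (t - τ) * g τ) volume 0 (t / 2) := by
  refine (hg.intervalIntegrable (t / 2) (by positivity)).continuousOn_mul
    (hf.continuousOn.comp (by fun_prop) fun τ hτ => ?_)
  rw [uIcc_of_le (by positivity)] at hτ
  exact mem_Ioi.2 (by linarith [hτ.2])

lemma intervalIntegrable_lconv_right_half (hf : IsConvKernel f) (hg : IsConvKernel g)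
    (ht : 0 < t) : IntervalIntegrable (fun τ => f (t - τ) * g τ) volume (t / 2) t := by
  have h := ((hg.intervalIntegrable_lconv_left_half hf ht).comp_sub_left t).symm
  simpa only [sub_sub_cancel, sub_zero, sub_half, mul_comm] using h

lemma intervalIntegrable_lconv (hf : IsConvKernel f) (hg : IsConvKernel g) (ht : 0 < t) :
    IntervalIntegrable (fun τ => f (t - τ) * g τ) volume 0 t :=
  (hf.intervalIntegrable_lconv_left_half hg ht).trans
    (hf.intervalIntegrable_lconv_right_half hg ht)

lemma lconv_sub (hk : IsConvKernel k) (hf : IsConvKernel f) (hg : IsConvKernel g) (ht : 0 < t) :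
    lconv k (fun u => f u - g u) t = lconv k f t - lconv k g t := by
  simp only [lconv, mul_sub]
  exact intervalIntegral.integral_sub (hk.intervalIntegrable_lconv hf ht)
    (hk.intervalIntegrable_lconv hg ht)

lemma lconv_sum_const_mul {ι : Type*} {s : Finset ι} {c : ι → ℝ} {g : ι → ℝ → ℝ}
    (hk : IsConvKernel k) (hg : ∀ i ∈ s, IsConvKernel (g i)) (ht : 0 < t) :
    lconv k (fun u => ∑ i ∈ s, c i * g i u) t = ∑ i ∈ s, c i * lconv k (g i) t := by
  simp only [lconv, Finset.mul_sum, mul_left_comm (k _)]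
  rw [intervalIntegral.integral_finsetSum fun i hi =>
    (hk.intervalIntegrable_lconv (hg i hi) ht).const_mul (c i)]
  simp only [intervalIntegral.integral_const_mul]

-- In each half only one factor comes close to its singularity at `0`.
lemma lconv_eq_add_halves (hf : IsConvKernel f) (hg : IsConvKernel g) (ht : 0 < t) :
    lconv f g t = (∫ τ in (0 : ℝ)..t / 2, f (t - τ) * g τ)
      + ∫ τ in (0 : ℝ)..t / 2, g (t - τ) * f τ := by
  have hsub := intervalIntegral.integral_comp_sub_left (a := t / 2) (b := t)
    (fun τ => g (t - τ) * f τ) t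
  simp only [sub_sub_cancel, sub_self, sub_half, mul_comm (g _)] at hsub
  rw [lconv, ← intervalIntegral.integral_add_adjacent_intervals
    (hf.intervalIntegrable_lconv_left_half hg ht) (hf.intervalIntegrable_lconv_right_half hg ht),
    hsub]
  simp only [mul_comm (g _)]

end IsConvKernel

lemma continuous_integral_comp_sub_mul {f g : ℝ → ℝ} (hf : Continuous f)
    (hg : LocallyIntegrable g) :
    Continuous fun p : ℝ × ℝ => ∫ τ in (0 : ℝ)..p.2, f (p.1 - τ) * g τ := by
  refine continuous_iff_continuousAt.2 fun ⟨x, y⟩ => ?_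
  obtain ⟨R, hxR, hyR⟩ : ∃ R, |x| < R ∧ |y| < R :=
    ⟨max |x| |y| + 1, by linarith [le_max_left |x| |y|], by linarith [le_max_right |x| |y|]⟩
  obtain ⟨M, hM⟩ := (isCompact_Icc (a := -(2 * R)) (b := 2 * R)).exists_bound_of_continuousOn
    hf.continuousOn
  refine intervalIntegral.continuousAt_parametric_primitive_of_dominated (X := ℝ) (μ := volume)
    (F := fun z τ => f (z - τ) * g τ) (fun τ => M * ‖g τ‖) (-R) R (fun z => ?_) ?_ ?_ ?_ ?_
    (abs_lt.1 hyR) (measure_singleton y)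
  · exact ((by fun_prop : Continuous fun τ => f (z - τ)).aestronglyMeasurable.mul
      hg.aestronglyMeasurable).restrict
  · filter_upwards [Ioo_mem_nhds (abs_lt.1 hxR).1 (abs_lt.1 hxR).2] with z hz
    refine (ae_restrict_iff' measurableSet_uIoc).2 (Eventually.of_forall fun τ hτ => ?_)
    rw [uIoc_of_le (by linarith [hz.1, hz.2])] at hτ
    rw [norm_mul]
    gcongr
    exact hM _ ⟨by linarith [hz.1, hτ.2], by linarith [hz.2, hτ.1]⟩
  · have hg_int : IntervalIntegrable g volume (-R) R := intervalIntegrable_iff.2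
      ((hg.integrableOn_isCompact isCompact_uIcc).mono_set uIoc_subset_uIcc)
    exact hg_int.norm.const_mul M
  · exact Eventually.of_forall fun τ => by fun_prop
  · exact ⟨by linarith [abs_nonneg y], by linarith [abs_nonneg y]⟩

namespace IsConvKernel

variable {f g : ℝ → ℝ} {t : ℝ}

lemma continuousAt_integral_half (hf : IsConvKernel f) (hg : IsConvKernel g) (ht : 0 < t) :
    ContinuousAt (fun u => ∫ τ in (0 : ℝ)..u / 2, f (u - τ) * g τ) t := by
  -- For `u` near `t` and `τ < u / 2`, the argument `u - τ` stays above `t / 4`, so the clamped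
  -- continuous function `fun x => f (max x (t / 4))` may replace `f`.
  have hclamp : Continuous fun x => f (max x (t / 4)) :=
    hf.continuousOn.comp_continuous (by fun_prop) fun x =>
      lt_max_of_lt_right (show 0 < t / 4 by positivity)
  have hcont := (continuous_integral_comp_sub_mul hclamp hg.locallyIntegrable_indicator_Ioi).comp
    (by fun_prop : Continuous fun u : ℝ => (u, u / 2))
  refine hcont.continuousAt.congr ?_
  filter_upwards [Ioi_mem_nhds (half_lt_self ht)] with u hu
  have hu' : t / 2 < u := hu
  refine intervalIntegral.integral_congr_Ioo_of_le (by linarith) fun τ hτ => ?_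
  simp only [indicator_of_mem (mem_Ioi.2 hτ.1),
    max_eq_left (show t / 4 ≤ u - τ by linarith [hτ.2])]

lemma continuousOn_lconv (hf : IsConvKernel f) (hg : IsConvKernel g) :
    ContinuousOn (lconv f g) (Ioi 0) := by
  refine continuousOn_of_forall_continuousAt fun t ht => ?_
  refine ((hf.continuousAt_integral_half hg ht).add
    (hg.continuousAt_integral_half hf ht)).congr ?_
  filter_upwards [Ioi_mem_nhds ht] with u hu
  exact (hf.lconv_eq_add_halves hg hu).symm

end IsConvKernel

lemma lconv_eq_integral_indicator {k g : ℝ → ℝ} {s t : ℝ} (hs : s ∈ Ioc 0 t) :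
    lconv k g s = ∫ τ in (0 : ℝ)..t, (Ioi 0).indicator k (s - τ) * g τ := by
  rw [lconv, intervalIntegral.integral_of_le hs.1.le, integral_Ioc_eq_integral_Ioo,
    intervalIntegral.integral_of_le (hs.1.le.trans hs.2),
    setIntegral_eq_of_subset_of_forall_sdiff_eq_zero (s := Ioo 0 s) measurableSet_Ioc
      (fun τ hτ => ⟨hτ.1, hτ.2.le.trans hs.2⟩)]
  · refine setIntegral_congr_fun measurableSet_Ioo fun τ hτ => ?_
    simp only [indicator_of_mem (mem_Ioi.2 (sub_pos.2 hτ.2))]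
  · intro τ hτ
    have hsτ : s - τ ∉ Ioi 0 := fun h => hτ.2 ⟨hτ.1.1, sub_pos.1 h⟩
    rw [indicator_of_notMem hsτ, zero_mul]

lemma integral_indicator_Ioi_comp_sub {k : ℝ → ℝ} {t τ : ℝ} (hτ : τ ∈ Ioc 0 t) :
    ∫ s in (0 : ℝ)..t, (Ioi 0).indicator k (s - τ) = ∫ s in (0 : ℝ)..t - τ, k s := by
  have hinter : Ioc (0 - τ) (t - τ) ∩ Ioi 0 = Ioc 0 (t - τ) := by
    rw [Ioc_inter_Ioi, max_eq_right (by linarith [hτ.1])]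
  rw [intervalIntegral.integral_comp_sub_right (fun s => (Ioi 0).indicator k s),
    intervalIntegral.integral_of_le (by linarith [hτ.1, hτ.2]),
    setIntegral_indicator measurableSet_Ioi, hinter,
    intervalIntegral.integral_of_le (sub_nonneg.2 hτ.2)]

namespace IsConvKernel

variable {f g k : ℝ → ℝ} {t : ℝ}

lemma integrableOn_prod_lconv (hk : IsConvKernel k) (hg : IsConvKernel g) (ht : 0 < t) :
    IntegrableOn (Function.uncurry fun s τ => (Ioi 0).indicator k (s - τ) * g τ)
      (Ioc 0 t ×ˢ Ioc 0 t) := by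
  have hconv := Integrable.convolution_integrand (ContinuousLinearMap.mul ℝ ℝ)
    (hg.integrable_indicator_Ioc ht) (hk.integrable_indicator_Ioc ht)
  refine hconv.integrableOn.congr_fun (fun ⟨s, τ⟩ ⟨hs, hτ⟩ => ?_)
    (measurableSet_Ioc.prod measurableSet_Ioc)
  have hτ' : τ ∈ Ioc 0 t := hτ
  have hst : s - τ ≤ t := by linarith [hs.2, hτ'.1]
  simp only [ContinuousLinearMap.mul_apply', Function.uncurry_apply_pair, indicator_of_mem hτ',
    mul_comm (g τ)]
  simp only [indicator, mem_Ioc, mem_Ioi, hst, and_true]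

protected lemma lconv (hk : IsConvKernel k) (hg : IsConvKernel g) : IsConvKernel (lconv k g) := by
  refine ⟨hk.continuousOn_lconv hg, fun t ht => ?_⟩
  have hprod := hk.integrableOn_prod_lconv hg ht
  rw [IntegrableOn, Measure.volume_eq_prod, ← Measure.prod_restrict] at hprod
  rw [intervalIntegrable_iff_integrableOn_Ioc_of_le ht.le]
  refine IntegrableOn.congr_fun hprod.integral_prod_left (fun s hs => ?_) measurableSet_Ioc
  rw [lconv_eq_integral_indicator hs, intervalIntegral.integral_of_le ht.le]
  rfl

lemma integral_lconv (hk : IsConvKernel k) (hg : IsConvKernel g) (ht : 0 < t) :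
    ∫ s in (0 : ℝ)..t, lconv k g s = lconv (fun u => ∫ s in (0 : ℝ)..u, k s) g t := by
  calc ∫ s in (0 : ℝ)..t, lconv k g s
      = ∫ s in (0 : ℝ)..t, ∫ τ in (0 : ℝ)..t, (Ioi 0).indicator k (s - τ) * g τ :=
        intervalIntegral.integral_congr_Ioo_of_le ht.le fun s hs =>
          lconv_eq_integral_indicator (Ioo_subset_Ioc_self hs)
    _ = ∫ τ in (0 : ℝ)..t, ∫ s in (0 : ℝ)..t, (Ioi 0).indicator k (s - τ) * g τ :=
        intervalIntegral_intervalIntegral_swap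
          (by simpa only [uIoc_of_le ht.le] using hk.integrableOn_prod_lconv hg ht)
    _ = ∫ τ in (0 : ℝ)..t, (∫ s in (0 : ℝ)..t - τ, k s) * g τ :=
        intervalIntegral.integral_congr_Ioo_of_le ht.le fun τ hτ => by
          simp only [intervalIntegral.integral_mul_const,
            integral_indicator_Ioi_comp_sub (Ioo_subset_Ioc_self hτ)]

lemma hasDerivAt_lconv_primitive (hk : IsConvKernel k) (hg : IsConvKernel g) (ht : 0 < t) :
    HasDerivAt (lconv k fun u => ∫ s in (0 : ℝ)..u, g s) (lconv k g t) t := by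
  rw [lconv_comm k g]
  refine ((hg.lconv hk).hasDerivAt_integral ht).congr_of_eventuallyEq ?_
  filter_upwards [Ioi_mem_nhds ht] with u hu
  rw [lconv_comm, hg.integral_lconv hk hu]

lemma hasDerivAt_lconv (hk : IsConvKernel k) (hg : IsConvKernel g)
    (hf : EqOn f (fun u => ∫ s in (0 : ℝ)..u, g s) (Ioi 0)) (ht : 0 < t) :
    HasDerivAt (lconv k f) (lconv k g t) t :=
  (hk.hasDerivAt_lconv_primitive hg ht).congr_of_eventuallyEq
    ((lconv_congr_right hf).eventuallyEq_of_mem (Ioi_mem_nhds ht))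

end IsConvKernel

/-- The function `h_{j+1}`, whose Laplace convolution with `k` is the `(j+1)`-fold integral of
`k`. -/
noncomputable def powerKernel (j : ℕ) : ℝ → ℝ :=
  fun u => u ^ j / j.factorial

lemma isConvKernel_powerKernel (j : ℕ) : IsConvKernel (powerKernel j) :=
  .of_continuous (by unfold powerKernel; fun_prop)

lemma integral_powerKernel (j : ℕ) (t : ℝ) :
    ∫ s in (0 : ℝ)..t, powerKernel j s = powerKernel (j + 1) t := by
  simp only [powerKernel]
  rw [intervalIntegral.integral_div, integral_pow, Nat.factorial_succ]
  push_cast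
  field_simp
  rw [zero_pow j.succ_ne_zero, sub_zero]

lemma lconv_powerKernel_zero (k : ℝ → ℝ) :
    lconv k (powerKernel 0) = fun t => ∫ s in (0 : ℝ)..t, k s := by
  ext t
  simp [lconv, powerKernel]

namespace IsConvKernel

variable {k : ℝ → ℝ}

lemma hasDerivAt_lconv_powerKernel_zero (hk : IsConvKernel k) :
    ∀ t ∈ Ioi (0 : ℝ), HasDerivAt (lconv k (powerKernel 0)) (k t) t := by
  intro t ht
  rw [lconv_powerKernel_zero]
  exact hk.hasDerivAt_integral ht

lemma hasDerivAt_lconv_powerKernel_succ (hk : IsConvKernel k) (j : ℕ) :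
    ∀ t ∈ Ioi (0 : ℝ), HasDerivAt (lconv k (powerKernel (j + 1))) (lconv k (powerKernel j) t) t :=
  fun _ ht => hk.hasDerivAt_lconv (isConvKernel_powerKernel j)
    (fun t _ => (integral_powerKernel j t).symm) ht

lemma iteratedDeriv_lconv_powerKernel (hk : IsConvKernel k) (m j : ℕ) :
    EqOn (iteratedDeriv (m + j + 1) (lconv k (powerKernel j))) (iteratedDeriv m k) (Ioi 0) := by
  induction j with
  | zero =>
    exact eqOn_iteratedDeriv_succ_of_hasDerivAt isOpen_Ioi hk.hasDerivAt_lconv_powerKernel_zero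
  | succ j ih =>
    exact (eqOn_iteratedDeriv_succ_of_hasDerivAt isOpen_Ioi
      (hk.hasDerivAt_lconv_powerKernel_succ j)).trans ih

lemma contDiffOn_lconv_powerKernel (hk : IsConvKernel k) {m : ℕ}
    (hk_smooth : ContDiffOn ℝ m k (Ioi 0)) (j : ℕ) :
    ContDiffOn ℝ (m + j + 1 : ℕ) (lconv k (powerKernel j)) (Ioi 0) := by
  induction j with
  | zero =>
    exact contDiffOn_succ_of_hasDerivAt isOpen_Ioi hk.hasDerivAt_lconv_powerKernel_zero hk_smooth
  | succ j ih =>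
    exact contDiffOn_succ_of_hasDerivAt isOpen_Ioi (hk.hasDerivAt_lconv_powerKernel_succ j) ih

end IsConvKernel

/-- The Taylor polynomial `∑_{j<n} c j • h_{j+1}` at `0` with prescribed derivatives `c j`. -/
noncomputable def taylorSum (n : ℕ) (c : ℕ → ℝ) : ℝ → ℝ :=
  fun u => ∑ j ∈ Finset.range n, c j * u ^ j / j.factorial

lemma taylorSum_eq_sum_powerKernel (n : ℕ) (c : ℕ → ℝ) (u : ℝ) :
    taylorSum n c u = ∑ j ∈ Finset.range n, c j * powerKernel j u := by
  simp only [taylorSum, powerKernel, mul_div_assoc]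

lemma isConvKernel_taylorSum (n : ℕ) (c : ℕ → ℝ) : IsConvKernel (taylorSum n c) :=
  .of_continuous (by unfold taylorSum; fun_prop)

lemma taylorSum_succ (n : ℕ) (c : ℕ → ℝ) (t : ℝ) :
    taylorSum (n + 1) c t = c 0 + ∫ s in (0 : ℝ)..t, taylorSum n (fun j => c (j + 1)) s := by
  simp only [taylorSum_eq_sum_powerKernel]
  rw [Finset.sum_range_succ', intervalIntegral.integral_finsetSum fun j _ =>
    Continuous.intervalIntegrable (by unfold powerKernel; fun_prop) _ _]
  simp only [intervalIntegral.integral_const_mul, integral_powerKernel]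
  simp [powerKernel, add_comm]

lemma IsConvKernel.lconv_taylorSum {k : ℝ → ℝ} (hk : IsConvKernel k) (n : ℕ) (c : ℕ → ℝ) {t : ℝ}
    (ht : 0 < t) :
    lconv k (taylorSum n c) t = ∑ j ∈ Finset.range n, c j * lconv k (powerKernel j) t := by
  rw [funext (taylorSum_eq_sum_powerKernel n c),
    hk.lconv_sum_const_mul (fun j _ => isConvKernel_powerKernel j) ht]

/-- `f` is `n` times continuously differentiable on `(0,∞)`, its `n`-th derivative is integrable
near `0`, and `f^{(j)}(0+) = c j` for `j < n`. The initial values are one-sided limits because `f`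
is meaningful on `(0,∞)` only. -/
structure HasInitialValues (n : ℕ) (f : ℝ → ℝ) (c : ℕ → ℝ) : Prop where
  contDiffOn : ContDiffOn ℝ n f (Ioi 0)
  intervalIntegrable : ∀ t, 0 < t → IntervalIntegrable (iteratedDeriv n f) volume 0 t
  tendsto : ∀ j < n, Tendsto (iteratedDeriv j f) (𝓝[>] 0) (𝓝 (c j))

namespace HasInitialValues

variable {n : ℕ} {f : ℝ → ℝ} {c : ℕ → ℝ}

protected lemma deriv (hf : HasInitialValues (n + 1) f c) :
    HasInitialValues n (deriv f) fun j => c (j + 1) where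
  contDiffOn := ((contDiffOn_succ_iff_deriv_of_isOpen isOpen_Ioi).1
    (by exact_mod_cast hf.contDiffOn)).2.2
  intervalIntegrable := by simpa only [iteratedDeriv_succ'] using hf.intervalIntegrable
  tendsto j hj := by
    simpa only [iteratedDeriv_succ'] using hf.tendsto (j + 1) (Nat.succ_lt_succ hj)

lemma hasDerivAt (hf : HasInitialValues (n + 1) f c) {t : ℝ} (ht : 0 < t) :
    HasDerivAt f (deriv f t) t :=
  ((hf.contDiffOn.differentiableOn (by simp)).differentiableAt (Ioi_mem_nhds ht)).hasDerivAt

lemma tendsto_zero (hf : HasInitialValues (n + 1) f c) : Tendsto f (𝓝[>] 0) (𝓝 (c 0)) := by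
  simpa only [iteratedDeriv_zero] using hf.tendsto 0 n.succ_pos

lemma eq_add_integral_deriv (hf : HasInitialValues (n + 1) f c)
    (hf' : IsConvKernel (deriv f)) {t : ℝ} (ht : 0 < t) :
    f t = c 0 + ∫ s in (0 : ℝ)..t, deriv f s := by
  rw [intervalIntegral.integral_eq_sub_of_hasDerivAt_of_tendsto ht
    (fun s hs => hf.hasDerivAt hs.1) (hf'.intervalIntegrable t ht) hf.tendsto_zero
    (hf.hasDerivAt ht).continuousAt.continuousWithinAt, add_sub_cancel]

lemma isConvKernel (hf : HasInitialValues n f c) : IsConvKernel f := by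
  induction n generalizing f c with
  | zero =>
    exact ⟨hf.contDiffOn.continuousOn, by simpa only [iteratedDeriv_zero] using
      hf.intervalIntegrable⟩
  | succ n ih =>
    have hf' := ih hf.deriv
    refine ⟨hf.contDiffOn.continuousOn, fun t ht => ?_⟩
    have hprim : ContinuousOn (fun u => c 0 + ∫ s in (0 : ℝ)..u, deriv f s) (uIcc 0 t) :=
      continuousOn_const.add (intervalIntegral.continuousOn_primitive_interval'
        (hf'.intervalIntegrable t ht) left_mem_uIcc)
    refine hprim.intervalIntegrable.congr fun u hu => (hf.eq_add_integral_deriv hf' ?_).symm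
    rw [uIoc_of_le ht.le] at hu
    exact hu.1

lemma sub_taylorSum_eq_integral (hf : HasInitialValues (n + 1) f c) {t : ℝ} (ht : 0 < t) :
    f t - taylorSum (n + 1) c t =
      ∫ s in (0 : ℝ)..t, (deriv f s - taylorSum n (fun j => c (j + 1)) s) := by
  have hf' := hf.deriv.isConvKernel
  rw [intervalIntegral.integral_sub (hf'.intervalIntegrable t ht)
    ((isConvKernel_taylorSum n _).intervalIntegrable t ht), hf.eq_add_integral_deriv hf' ht,
    taylorSum_succ, add_sub_add_left_eq_sub]

lemma contDiffOn_lconv_sub_taylorSum {k : ℝ → ℝ} (hf : HasInitialValues n f c)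
    (hk : IsConvKernel k) :
    ContDiffOn ℝ n (lconv k fun u => f u - taylorSum n c u) (Ioi 0) := by
  induction n generalizing f c with
  | zero =>
    exact contDiffOn_zero.2
      (hk.continuousOn_lconv (hf.isConvKernel.sub (isConvKernel_taylorSum 0 c)))
  | succ n ih =>
    have hder := hf.deriv
    exact contDiffOn_succ_of_hasDerivAt isOpen_Ioi
      (fun t ht => hk.hasDerivAt_lconv (hder.isConvKernel.sub (isConvKernel_taylorSum n _))
        (fun _ hs => hf.sub_taylorSum_eq_integral hs) ht)
      (ih hder)

lemma iteratedDeriv_lconv_eq_add {k : ℝ → ℝ} (hf : HasInitialValues n f c)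
    (hk : IsConvKernel k) (hk_smooth : ContDiffOn ℝ (n - 1 : ℕ) k (Ioi 0)) {t : ℝ} (ht : 0 < t) :
    iteratedDeriv n (lconv k f) t = iteratedDeriv n (lconv k fun u => f u - taylorSum n c u) t
      + ∑ j ∈ Finset.range n, c j * iteratedDeriv n (lconv k (powerKernel j)) t := by
  have hsplit : EqOn (lconv k f) ((lconv k fun u => f u - taylorSum n c u)
      + fun u => ∑ j ∈ Finset.range n, c j * lconv k (powerKernel j) u) (Ioi 0) := fun u hu => by
    rw [Pi.add_apply, ← hk.lconv_taylorSum n c hu,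
      hk.lconv_sub hf.isConvKernel (isConvKernel_taylorSum n c) hu, sub_add_cancel]
  have hrem : ContDiffAt ℝ n (lconv k fun u => f u - taylorSum n c u) t :=
    (hf.contDiffOn_lconv_sub_taylorSum hk).contDiffAt (Ioi_mem_nhds ht)
  have hpow : ∀ j ∈ Finset.range n,
      ContDiffAt ℝ n (fun u => c j * lconv k (powerKernel j) u) t := fun j _ =>
    contDiffAt_const.mul (((hk.contDiffOn_lconv_powerKernel hk_smooth j).of_le
      (by exact_mod_cast (by omega : n ≤ n - 1 + j + 1))).contDiffAt (Ioi_mem_nhds ht))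
  rw [hsplit.iteratedDeriv_of_isOpen isOpen_Ioi n ht,
    iteratedDeriv_add hrem (ContDiffAt.sum hpow), iteratedDeriv_fun_sum hpow]
  simp only [iteratedDeriv_const_mul_field]

end HasInitialValues

theorem statement16_general (n : ℕ) (k : ℝ → ℝ) (hk : IsConvKernel k)
    (hk_smooth : ContDiffOn ℝ (n - 1 : ℕ) k (Ioi 0)) :
    (∀ j < n, ∀ t : ℝ, 0 < t →
        iteratedDeriv n (lconv k (powerKernel j)) t = iteratedDeriv (n - j - 1) k t) ∧
      ∀ (f : ℝ → ℝ) (c : ℕ → ℝ), HasInitialValues n f c → ∀ t : ℝ, 0 < t →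
        iteratedDeriv n (lconv k fun u => f u - taylorSum n c u) t
          = iteratedDeriv n (lconv k f) t
            - ∑ j ∈ Finset.range n, c j * iteratedDeriv (n - j - 1) k t := by
  have hpow : ∀ j < n, ∀ t : ℝ, 0 < t →
      iteratedDeriv n (lconv k (powerKernel j)) t = iteratedDeriv (n - j - 1) k t := by
    intro j hj t ht
    simpa only [show n - j - 1 + j + 1 = n by omega] using
      hk.iteratedDeriv_lconv_powerKernel (n - j - 1) j ht
  refine ⟨hpow, fun f c hf t ht => ?_⟩
  rw [hf.iteratedDeriv_lconv_eq_add hk hk_smooth ht,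
    Finset.sum_congr rfl fun j hj => by rw [hpow j (Finset.mem_range.1 hj) t ht],
    add_sub_cancel_right]

/-- For a kernel `k` locally integrable on `[0,∞)` that is, for each
`j ∈ {0,…,n-1}`, `(n-j-1)` times continuously differentiable on `(0,∞)` and such that
`I₀₊^{j+1} k = k * h_{j+1}` is `n` times differentiable on `(0,∞)`, one has
`dⁿ/dtⁿ (k * h_{j+1})(t) = k^{(n-j-1)}(t)` for `t > 0`; consequently, for
`f ∈ Cⁿ_{-1}(0,∞)` with `f^{(j)}(0+) = c j`, the Caputo GFD admits the representation
`(∗D_{(k)} f)(t) = (D_{(k)} f)(t) - ∑_{j=0}^{n-1} f^{(j)}(0) k^{(n-j-1)}(t)`. -/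
theorem statement16 (n : ℕ) (hn : 1 ≤ n) (k : ℝ → ℝ)
    (hk_int : MeasureTheory.LocallyIntegrableOn k (Set.Ici 0))
    (hk_smooth : ∀ j < n, ContDiffOn ℝ (n - j - 1 : ℕ) k (Set.Ioi 0))
    (hk_diff : ∀ j < n, ∀ m < n, ∀ t : ℝ, 0 < t →
      DifferentiableAt ℝ
        (iteratedDeriv m (lconv k (fun u => u ^ j / j.factorial))) t) :
    (∀ j < n, ∀ t : ℝ, 0 < t →
        iteratedDeriv n (lconv k (fun u => u ^ j / j.factorial)) t
          = iteratedDeriv (n - j - 1) k t) ∧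
      ∀ (f : ℝ → ℝ) (c : ℕ → ℝ),
        (∀ j < n, ∀ t : ℝ, 0 < t → DifferentiableAt ℝ (iteratedDeriv j f) t) →
        Cm1 (iteratedDeriv n f) →
        (∀ j < n, Filter.Tendsto (iteratedDeriv j f)
          (nhdsWithin 0 (Set.Ioi 0)) (nhds (c j))) →
        ∀ t : ℝ, 0 < t →
          iteratedDeriv n (lconv k (fun u =>
            f u - ∑ j ∈ Finset.range n, c j * u ^ j / j.factorial)) t
            = iteratedDeriv n (lconv k f) t
              - ∑ j ∈ Finset.range n, c j * iteratedDeriv (n - j - 1) k t := by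
  have hk : IsConvKernel k := .of_locallyIntegrableOn (hk_smooth 0 hn).continuousOn hk_int
  obtain ⟨hpow, hcaputo⟩ := statement16_general n k hk (hk_smooth 0 hn)
  refine ⟨hpow, fun f c hf_diff hf_top hf_lim => hcaputo f c ⟨?_, ?_, hf_lim⟩⟩
  · exact contDiffOn_of_differentiableAt_iteratedDeriv isOpen_Ioi hf_diff
      hf_top.isConvKernel.continuousOn
  · exact hf_top.isConvKernel.intervalIntegrable
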